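/- Every unrestricted LD-derivation E for a program P starting from a query R0 that is an instance of a query Q0 has a lift D starting from Q0; that is, there is an LD-derivation D for P beginning with Q0, of the same length as E, applying at each step a variant of the clause applied at the corresponding step of E. -/

import Mathlib

/-!
The lift is built step by step, keeping the invariant that the `i`-th query of `E` is an instance
`Qσ` of the `i`-th query `Q` of the lift, together with a strict bound `N` on all variables used so
far.

For a resolution step of `E` with the clause `C` (`lift_step`), rename `C` by `n ↦ n + N`, which
keeps it apart from the history. Since the variables of `Q` lie below `N` and those of the renamed
clause do not, the substitutions acting on `Q` and on `C` glue to a single substitution `τ`, and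
`τ` unifies the selected atom with the renamed head. Hence an idempotent relevant mgu `μ` exists;
moreover `μτ = τ`, so the next query of `E` is the `τ`-instance of the resolvent, and the invariant
persists.

The required unification theorem (`exists_strongMgu`, `exists_mgu`) is obtained by the usual
decomposition and variable elimination. Given a unifier `σ`, termination follows from the size of
the `σ`-instance of the equations, which decreases in every step. The property `θτ = τ` for every
unifier `τ` gives both generality and idempotency of `θ`.
-/

/- Formalization of definite clause programs with the cut (Prolog),
   LD-resolution, LD-trees, pruning by the cut, specifications,
   correctness and completeness notions. -/

namespace LP

/-- First-order terms over function symbols `F`; variables are indexed by `ℕ`. -/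
inductive Tm (F : Type) : Type
  | var : ℕ → Tm F
  | fn  : F → List (Tm F) → Tm F

/-- Ordinary (non-cut) atoms over function symbols `F` and predicate symbols `Pr`. -/
structure Atom (F Pr : Type) : Type where
  pred : Pr
  args : List (Tm F)

/-- Extended atoms: ordinary atoms together with the cut `!`. -/
inductive EAtom (F Pr : Type) : Type
  | cut : EAtom F Pr
  | atm : Atom F Pr → EAtom F Pr

/-- A query is a finite sequence of extended atoms. -/
abbrev Query (F Pr : Type) := List (EAtom F Pr)

/-- A definite clause (whose body may contain cuts). -/
structure Clause (F Pr : Type) : Type where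
  head : Atom F Pr
  body : Query F Pr

/-- A program (with cuts) is a finite sequence of clauses. -/
abbrev Prog (F Pr : Type) := List (Clause F Pr)

/-- Substitutions. -/
abbrev Subst (F : Type) := ℕ → Tm F

variable {F Pr : Type}

/-- The empty (identity) substitution. -/
def Subst.idS : Subst F := fun n => Tm.var n

/-- Applying a substitution to a term. -/
def Tm.subst (θ : Subst F) : Tm F → Tm F
  | .var n => θ n
  | .fn f ts => .fn f (ts.attach.map (fun t => Tm.subst θ t.1))
decreasing_by
  have := List.sizeOf_lt_of_mem t.2
  simp only [Tm.fn.sizeOf_spec]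
  omega

/-- The list of variables of a term. -/
def Tm.varsL : Tm F → List ℕ
  | .var n => [n]
  | .fn _ ts => ts.attach.flatMap (fun t => Tm.varsL t.1)
decreasing_by
  have := List.sizeOf_lt_of_mem t.2
  simp only [Tm.fn.sizeOf_spec]
  omega

/-- The set of variables of a term. -/
def Tm.vars (t : Tm F) : Set ℕ := {n | n ∈ t.varsL}

/-- A term is ground if it has no variables. -/
def Tm.Ground (t : Tm F) : Prop := t.vars = ∅

def Atom.subst (θ : Subst F) (A : Atom F Pr) : Atom F Pr :=
  ⟨A.pred, A.args.map (Tm.subst θ)⟩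

def Atom.vars (A : Atom F Pr) : Set ℕ := {n | ∃ t ∈ A.args, n ∈ t.vars}

/-- A ground atom (an element of the Herbrand base `HB` when it moreover holds). -/
def Atom.Ground (A : Atom F Pr) : Prop := A.vars = ∅

def EAtom.subst (θ : Subst F) : EAtom F Pr → EAtom F Pr
  | .cut => .cut
  | .atm A => .atm (Atom.subst θ A)

def EAtom.vars : EAtom F Pr → Set ℕ
  | .cut => ∅
  | .atm A => A.vars

def EAtom.Ground (a : EAtom F Pr) : Prop := a.vars = ∅

def Query.subst (θ : Subst F) (Q : Query F Pr) : Query F Pr := Q.map (EAtom.subst θ)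

def Query.vars (Q : Query F Pr) : Set ℕ := {n | ∃ a ∈ Q, n ∈ EAtom.vars a}

def Query.Ground (Q : Query F Pr) : Prop := Query.vars Q = ∅

def Clause.subst (θ : Subst F) (C : Clause F Pr) : Clause F Pr :=
  ⟨Atom.subst θ C.head, Query.subst θ C.body⟩

def Clause.vars (C : Clause F Pr) : Set ℕ := C.head.vars ∪ Query.vars C.body

def Clause.Ground (C : Clause F Pr) : Prop := C.vars = ∅

/-- The domain of a substitution. -/
def Subst.dom (θ : Subst F) : Set ℕ := {n | θ n ≠ .var n}

/-- The range variables of a substitution. -/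
def Subst.rng (θ : Subst F) : Set ℕ := {m | ∃ n, θ n ≠ .var n ∧ m ∈ (θ n).vars}

/-- All variables of a substitution. -/
def Subst.varSet (θ : Subst F) : Set ℕ := θ.dom ∪ θ.rng

/-- Composition: apply `θ` first, then `σ`. -/
def Subst.comp (θ σ : Subst F) : Subst F := fun n => (θ n).subst σ

/-- A substitution is idempotent when its domain and range are disjoint. -/
def Subst.Idempotent (θ : Subst F) : Prop := Disjoint θ.dom θ.rng

/-- A substitution is ground if it maps every domain variable to a ground term. -/
def Subst.GroundOn (θ : Subst F) : Prop := ∀ n ∈ θ.dom, (θ n).Ground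

/-- `compN θ i k` is the composition `θ i ; θ (i+1) ; ⋯ ; θ (i+k-1)`. -/
def compN (θ : ℕ → Subst F) : ℕ → ℕ → Subst F
  | _, 0 => Subst.idS
  | i, k+1 => Subst.comp (θ i) (compN θ (i+1) k)

/-- `θ` unifies atoms `A` and `B`. -/
def Unifies (θ : Subst F) (A B : Atom F Pr) : Prop := Atom.subst θ A = Atom.subst θ B

/-- `θ` is a most general unifier of `A` and `B`. -/
def IsMgu (θ : Subst F) (A B : Atom F Pr) : Prop :=
  Unifies θ A B ∧ ∀ σ : Subst F, Unifies σ A B → ∃ δ : Subst F, ∀ n, σ n = (θ n).subst δ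

/-- A unifier is relevant if all its variables occur in the unified atoms. -/
def Relevant (θ : Subst F) (A B : Atom F Pr) : Prop := θ.varSet ⊆ A.vars ∪ B.vars

/-- `B` is an instance of `A`. -/
def Atom.Inst (B A : Atom F Pr) : Prop := ∃ θ : Subst F, B = Atom.subst θ A

/-- `Q'` is an instance of `Q`. -/
def Query.Inst (Q' Q : Query F Pr) : Prop := ∃ θ : Subst F, Q' = Query.subst θ Q

/-- `C'` is an instance of `C`. -/
def Clause.Inst (C' C : Clause F Pr) : Prop := ∃ θ : Subst F, C' = Clause.subst θ C

/-- `C` and `C'` are variants of each other. -/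
def Variant (C C' : Clause F Pr) : Prop := Clause.Inst C C' ∧ Clause.Inst C' C

/-! ### Specifications -/

/-- Membership of an extended atom in `S ∪ {!}`. -/
def EAtomIn (S : Set (Atom F Pr)) : EAtom F Pr → Prop
  | .cut => True
  | .atm A => A ∈ S

/-- `S ⊨ Q`: every atom of `Q` is in `S ∪ {!}`. -/
def SpecModels (S : Set (Atom F Pr)) (Q : Query F Pr) : Prop := ∀ a ∈ Q, EAtomIn S a

/-- A set of atoms is closed under substitution. -/
def SubstClosed (S : Set (Atom F Pr)) : Prop := ∀ A ∈ S, ∀ θ : Subst F, Atom.subst θ A ∈ S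

/-- The restriction of a set of atoms to ground atoms (to `HB`). -/
def HBRestrict (S : Set (Atom F Pr)) : Set (Atom F Pr) := {A ∈ S | A.Ground}

/-- A ground atom `A` is covered by clause `C` w.r.t. `S`:
`A` is the head of a ground instance of `C` whose body atoms are in `S ∪ {!}`. -/
def CoveredBy (S : Set (Atom F Pr)) (C : Clause F Pr) (A : Atom F Pr) : Prop :=
  ∃ θ : Subst F, Clause.Ground (Clause.subst θ C) ∧ Atom.subst θ C.head = A ∧
    SpecModels S (Query.subst θ C.body)

/-- The least Herbrand model of `P` (the cut is treated as true). -/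
inductive MP (P : Prog F Pr) : Atom F Pr → Prop where
  | step : ∀ C ∈ P, ∀ θ : Subst F, Clause.Ground (Clause.subst θ C) →
      (∀ A : Atom F Pr, EAtom.atm A ∈ Query.subst θ C.body → MP P A) →
      MP P (Atom.subst θ C.head)

/-! ### General interpretations and logical consequence -/

structure Interp (F Pr : Type) : Type 1 where
  carrier : Type
  fnI : F → List carrier → carrier
  predI : Pr → List carrier → Prop

def Interp.evalTm (I : Interp F Pr) (v : ℕ → I.carrier) : Tm F → I.carrier
  | .var n => v n
  | .fn f ts => I.fnI f (ts.attach.map (fun t => I.evalTm v t.1))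
decreasing_by
  have := List.sizeOf_lt_of_mem t.2
  simp only [Tm.fn.sizeOf_spec]
  omega

def Interp.holdsA (I : Interp F Pr) (v : ℕ → I.carrier) (A : Atom F Pr) : Prop :=
  I.predI A.pred (A.args.map (I.evalTm v))

/-- The cut is true in every interpretation. -/
def Interp.holdsE (I : Interp F Pr) (v : ℕ → I.carrier) : EAtom F Pr → Prop
  | .cut => True
  | .atm A => I.holdsA v A

def Interp.holdsQ (I : Interp F Pr) (v : ℕ → I.carrier) (Q : Query F Pr) : Prop :=
  ∀ a ∈ Q, I.holdsE v a

def Interp.ModelsClause (I : Interp F Pr) (C : Clause F Pr) : Prop :=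
  ∀ v : ℕ → I.carrier, I.holdsQ v C.body → I.holdsA v C.head

def Interp.ModelsProg (I : Interp F Pr) (P : Prog F Pr) : Prop :=
  ∀ C ∈ P, I.ModelsClause C

/-- `P ⊨ Q` (truth of a formula is truth of its universal closure). -/
def Entails (P : Prog F Pr) (Q : Query F Pr) : Prop :=
  ∀ I : Interp F Pr, I.ModelsProg P → ∀ v : ℕ → I.carrier, I.holdsQ v Q

/-- `M` (a set of ground atoms) is a Herbrand model of `P`. -/
def HerbModels (M : Set (Atom F Pr)) (P : Prog F Pr) : Prop :=
  ∀ C ∈ P, ∀ θ : Subst F, Clause.Ground (Clause.subst θ C) →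
    (∀ A : Atom F Pr, EAtom.atm A ∈ Query.subst θ C.body → A ∈ M) →
    Atom.subst θ C.head ∈ M

/-- Removing all occurrences of the cut from a query. -/
def rmCutQ (Q : Query F Pr) : Query F Pr :=
  Q.filterMap (fun a => match a with | .cut => none | .atm A => some (.atm A))

/-- Removing all occurrences of the cut from a program. -/
def rmCutProg (P : Prog F Pr) : Prog F Pr := P.map (fun C => ⟨C.head, rmCutQ C.body⟩)

/-! ### LD-derivations -/

/-- Variables occurring in the queries `Q 0 … Q i`, the mgu's `sub 0 … sub (i-1)`
and the clause variants `cls 0 … cls (i-1)` of a derivation. -/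
def histVars (Q : ℕ → Query F Pr) (sub : ℕ → Subst F)
    (cls : ℕ → Option (Clause F Pr)) (i : ℕ) : Set ℕ :=
  {n | (∃ j ≤ i, n ∈ Query.vars (Q j)) ∨ (∃ j < i, n ∈ (sub j).varSet) ∨
       (∃ j < i, ∃ C : Clause F Pr, cls j = some C ∧ n ∈ C.vars)}

/-- One LD-resolution step (names the clause variant used, if any):
either a leading cut is deleted, or the first atom is resolved
with a clause via an idempotent relevant mgu. -/
def DStep (Q Q' : Query F Pr) (θ : Subst F) (oc : Option (Clause F Pr)) : Prop :=
  (∃ rest : Query F Pr, Q = .cut :: rest ∧ Q' = rest ∧ θ = Subst.idS ∧ oc = none) ∨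
  (∃ (A : Atom F Pr) (rest : Query F Pr) (C : Clause F Pr),
      Q = .atm A :: rest ∧ oc = some C ∧
      IsMgu θ A C.head ∧ θ.Idempotent ∧ Relevant θ A C.head ∧
      Q' = Query.subst θ (C.body ++ rest))

/-- A finite LD-derivation: queries `Q 0, …, Q len`,
mgu's `sub 0, …, sub (len-1)` and clause variants `cls 0, …, cls (len-1)`,
with clause variants standardized apart. -/
structure Deriv (F Pr : Type) : Type where
  len : ℕ
  Q : ℕ → Query F Pr
  sub : ℕ → Subst F
  cls : ℕ → Option (Clause F Pr)
  step : ∀ i < len, DStep (Q i) (Q (i+1)) (sub i) (cls i)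
  fresh : ∀ i < len, ∀ C : Clause F Pr, cls i = some C →
    Disjoint C.vars (histVars Q sub cls i)

/-- The derivation only uses (variants of) clauses of the program `P`. -/
def Deriv.FromProg (P : Prog F Pr) (D : Deriv F Pr) : Prop :=
  ∀ i < D.len, ∀ C : Clause F Pr, D.cls i = some C → ∃ C0 ∈ P, Variant C C0

def Deriv.Successful (D : Deriv F Pr) : Prop := D.Q D.len = []

/-- The computed answer `Q0 θ1 ⋯ θn` of a derivation. -/
def Deriv.answer (D : Deriv F Pr) : Query F Pr := Query.subst (compN D.sub 0 D.len) (D.Q 0)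

/-- At position `j` the query has a (protected) suffix of length `L`; the prefix
before it succeeds exactly at position `m` (the subderivation for the prefix ends there). -/
def Deriv.SuffixEndsAt (D : Deriv F Pr) (j L m : ℕ) : Prop :=
  j ≤ m ∧ m ≤ D.len ∧ (∀ i, j ≤ i → i < m → L < (D.Q i).length) ∧ (D.Q m).length = L

/-- An infinite LD-derivation. -/
structure InfLD (F Pr : Type) (P : Prog F Pr) : Type where
  Q : ℕ → Query F Pr
  sub : ℕ → Subst F
  cls : ℕ → Option (Clause F Pr)
  step : ∀ i : ℕ, DStep (Q i) (Q (i+1)) (sub i) (cls i)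
  fresh : ∀ i : ℕ, ∀ C : Clause F Pr, cls i = some C →
    Disjoint C.vars (histVars Q sub cls i)
  prog : ∀ i : ℕ, ∀ C : Clause F Pr, cls i = some C → ∃ C0 ∈ P, Variant C C0

/-- One SLD-resolution step, with an arbitrarily selected atom. -/
def SStep (Q Q' : Query F Pr) (θ : Subst F) (oc : Option (Clause F Pr)) : Prop :=
  (∃ l r : Query F Pr, Q = l ++ .cut :: r ∧ Q' = l ++ r ∧ θ = Subst.idS ∧ oc = none) ∨
  (∃ (l r : Query F Pr) (A : Atom F Pr) (C : Clause F Pr),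
      Q = l ++ .atm A :: r ∧ oc = some C ∧
      IsMgu θ A C.head ∧ θ.Idempotent ∧ Relevant θ A C.head ∧
      Q' = Query.subst θ (l ++ C.body ++ r))

/-- An infinite SLD-derivation (under an arbitrary selection rule). -/
structure InfSLD (F Pr : Type) (P : Prog F Pr) : Type where
  Q : ℕ → Query F Pr
  sub : ℕ → Subst F
  cls : ℕ → Option (Clause F Pr)
  step : ∀ i : ℕ, SStep (Q i) (Q (i+1)) (sub i) (cls i)
  fresh : ∀ i : ℕ, ∀ C : Clause F Pr, cls i = some C →
    Disjoint C.vars (histVars Q sub cls i)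
  prog : ∀ i : ℕ, ∀ C : Clause F Pr, cls i = some C → ∃ C0 ∈ P, Variant C C0

/-! ### Unrestricted LD-derivations and lifts -/

/-- One step of an unrestricted LD-derivation for program `P`. -/
def UStep (P : Prog F Pr) (Q Q' : Query F Pr) (θ : Subst F)
    (oc : Option (Clause F Pr)) : Prop :=
  (∃ rest : Query F Pr, Q = .cut :: rest ∧ Q' = rest ∧ θ = Subst.idS ∧ oc = none) ∨
  (∃ (A : Atom F Pr) (rest B : Query F Pr) (C : Clause F Pr),
      Q = .atm A :: rest ∧ oc = some C ∧ C ∈ P ∧ Subst.dom θ ⊆ Query.vars Q ∧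
      Clause.Inst ⟨Atom.subst θ A, B⟩ C ∧ Q' = B ++ Query.subst θ rest)

/-- A finite unrestricted LD-derivation for `P`. -/
structure UDeriv (F Pr : Type) (P : Prog F Pr) : Type where
  len : ℕ
  Q : ℕ → Query F Pr
  sub : ℕ → Subst F
  cls : ℕ → Option (Clause F Pr)
  step : ∀ i < len, UStep P (Q i) (Q (i+1)) (sub i) (cls i)

def UDeriv.Successful {P : Prog F Pr} (E : UDeriv F Pr P) : Prop := E.Q E.len = []

def UDeriv.answer {P : Prog F Pr} (E : UDeriv F Pr P) : Query F Pr :=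
  Query.subst (compN E.sub 0 E.len) (E.Q 0)

/-- The LD-derivation `D` is a lift of the unrestricted LD-derivation `E`. -/
def IsLift {P : Prog F Pr} (D : Deriv F Pr) (E : UDeriv F Pr P) : Prop :=
  Query.Inst (E.Q 0) (D.Q 0) ∧ D.len = E.len ∧
  (∀ i < D.len, (E.cls i = none ↔ D.cls i = none) ∧
    ∀ C C' : Clause F Pr, E.cls i = some C → D.cls i = some C' → Variant C' C)

/-! ### c-s-specifications (call-success specifications) -/

/-- `P` is c-s-correct w.r.t. `(pre, post)`: in every LD-derivation beginning with an
atomic query from `pre`, each selected atom is in `pre ∪ {!}` and each atomic computed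
answer of a successful subderivation is in `post ∪ {!}`. -/
def CsCorrect (P : Prog F Pr) (pre post : Set (Atom F Pr)) : Prop :=
  ∀ D : Deriv F Pr, D.FromProg P → (∃ A ∈ pre, D.Q 0 = [.atm A]) →
    (∀ i ≤ D.len, ∀ (a : EAtom F Pr) (rest : Query F Pr), D.Q i = a :: rest →
        a = .cut ∨ ∃ A ∈ pre, a = .atm A) ∧
    (∀ j m : ℕ, ∀ (A : Atom F Pr) (rest : Query F Pr), D.Q j = .atm A :: rest →
        D.SuffixEndsAt j rest.length m →
        Atom.subst (compN D.sub j (m - j)) A ∈ post)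

/-- The `i`-th element of `Q` (if any) is in `S ∪ {!}`. -/
def QIn (S : Set (Atom F Pr)) (Q : Query F Pr) (i : ℕ) : Prop :=
  ∀ a : EAtom F Pr, Q[i]? = some a → EAtomIn S a

/-- A clause is well-asserted w.r.t. a c-s-specification `(pre, post)`. -/
def WellAssertedClause (pre post : Set (Atom F Pr)) (C : Clause F Pr) : Prop :=
  ∀ θ : Subst F, Atom.subst θ C.head ∈ pre →
    (∀ k < C.body.length,
      (∀ i < k, QIn post (Query.subst θ C.body) i) → QIn pre (Query.subst θ C.body) k) ∧
    ((∀ i < C.body.length, QIn post (Query.subst θ C.body) i) → Atom.subst θ C.head ∈ post)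

/-- A query is well-asserted w.r.t. `(pre, post)`. -/
def WellAssertedQuery (pre post : Set (Atom F Pr)) (Q : Query F Pr) : Prop :=
  ∀ θ : Subst F, ∀ k < Q.length,
    (∀ i < k, QIn post (Query.subst θ Q) i) → QIn pre (Query.subst θ Q) k

/-! ### c-coveredness -/

/-- Ground atom `A` is c-covered w.r.t. `S` and `(pre, post)` by the clause `C`,
which is (a variant of) the `i`-th clause of `P`. -/
def CCoveredBy (P : Prog F Pr) (S pre post : Set (Atom F Pr)) (A : Atom F Pr)
    (C : Clause F Pr) (i : ℕ) : Prop :=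
  (∃ C0 : Clause F Pr, P[i]? = some C0 ∧ Variant C C0) ∧
  CoveredBy S C A ∧
  (∀ j < i, ∀ (H' : Atom F Pr) (A0 A1 : Query F Pr),
      P[j]? = some ⟨H', A0 ++ .cut :: A1⟩ → EAtom.cut ∉ A0 → H'.pred = C.head.pred →
      ∀ H'' ∈ pre, Atom.Inst A H'' →
        ∀ θ : Subst F, Atom.Ground (Atom.subst θ H'') →
          ¬ CoveredBy (HBRestrict post) ⟨H', A0⟩ (Atom.subst θ H'')) ∧
  (∀ B0 B1 : Query F Pr, C.body = B0 ++ .cut :: B1 →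
    ∀ ρ : Subst F, Subst.dom ρ ⊆ C.head.vars → (Subst.rng ρ ∩ C.vars) ⊆ C.head.vars →
      Disjoint (Subst.dom ρ) (Subst.rng ρ) →
      Atom.subst ρ C.head ∈ pre → Atom.Inst A (Atom.subst ρ C.head) →
      ∀ η : Subst F, Subst.dom η = Query.vars (Query.subst ρ B0) →
        Query.Ground (Query.subst η (Query.subst ρ B0)) →
        SpecModels post (Query.subst η (Query.subst ρ B0)) →
        CoveredBy S ⟨Atom.subst η (Atom.subst ρ C.head),
                     Query.subst η (Query.subst ρ B1)⟩ A)

/-- `A` is c-covered by some clause of `P`. -/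
def CCoveredByProg (P : Prog F Pr) (S pre post : Set (Atom F Pr)) (A : Atom F Pr) : Prop :=
  ∃ (i : ℕ) (C : Clause F Pr), P[i]? = some C ∧ CCoveredBy P S pre post A C i

/-! ### Level mappings, recurrence, acceptability -/

/-- Extension of a level mapping to extended atoms, with `|!| = 0`. -/
def eLvl (lvl : Atom F Pr → ℕ) : EAtom F Pr → ℕ
  | .cut => 0
  | .atm A => lvl A

/-- `P` is recurrent w.r.t. the level mapping `lvl`. -/
def Recurrent (P : Prog F Pr) (lvl : Atom F Pr → ℕ) : Prop :=
  ∀ C ∈ P, ∀ θ : Subst F, Clause.Ground (Clause.subst θ C) →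
    ∀ a ∈ Query.subst θ C.body, eLvl lvl a < lvl (Atom.subst θ C.head)

/-- `P` is acceptable w.r.t. the specification `S` and the level mapping `lvl`. -/
def Acceptable (P : Prog F Pr) (S : Set (Atom F Pr)) (lvl : Atom F Pr → ℕ) : Prop :=
  (∀ A : Atom F Pr, MP P A → A ∈ S) ∧
  (∀ C ∈ P, ∀ θ : Subst F, Clause.Ground (Clause.subst θ C) →
    ∀ i < C.body.length, (∀ j < i, QIn S (Query.subst θ C.body) j) →
      ∀ a : EAtom F Pr, (Query.subst θ C.body)[i]? = some a →
        eLvl lvl a < lvl (Atom.subst θ C.head))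

/-- A query is bounded w.r.t. a level mapping. -/
def BoundedQuery (lvl : Atom F Pr → ℕ) (Q : Query F Pr) : Prop :=
  ∃ k : ℕ, ∀ a ∈ Q, ∀ θ : Subst F, EAtom.Ground (EAtom.subst θ a) →
    eLvl lvl (EAtom.subst θ a) < k

/-! ### Completeness notions -/

/-- `P` is complete for the query `Q` w.r.t. `S`. -/
def CompleteFor (P : Prog F Pr) (S : Set (Atom F Pr)) (Q : Query F Pr) : Prop :=
  ∀ θ : Subst F, Query.Ground (Query.subst θ Q) → SpecModels S (Query.subst θ Q) →
    ∀ A : Atom F Pr, EAtom.atm A ∈ Query.subst θ Q → MP P A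

end LP

namespace LP

variable {F Pr : Type}

/-! ### LD-trees and SLD-trees -/

/-- A clause is applicable to an atom if (a variant of) its head unifies with it. -/
def Applicable (A : Atom F Pr) (C0 : Clause F Pr) : Prop :=
  ∃ (C : Clause F Pr) (θ : Subst F), Variant C C0 ∧ Atom.subst θ A = Atom.subst θ C.head

open Classical in
/-- The clauses of `P` applicable to `A`, in program order. -/
noncomputable def applicables (P : Prog F Pr) (A : Atom F Pr) : Prog F Pr :=
  P.filter (fun C0 => decide (Applicable A C0))

/-- Variables occurring in the labels, mgu's and clause variants along the path
from the root to `p` (inclusive). -/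
def pathVarsAux (label : List ℕ → Query F Pr) (esub : List ℕ → Subst F)
    (ecls : List ℕ → Option (Clause F Pr)) (p : List ℕ) : Set ℕ :=
  {n | ∃ q : List ℕ, q <+: p ∧
        (n ∈ Query.vars (label q) ∨ n ∈ (esub q).varSet ∨
         ∃ C : Clause F Pr, ecls q = some C ∧ n ∈ C.vars)}

/-- The LD-tree for a program `P` and an initial query `Q0`.  Nodes are coded by
lists of child indices (the root is `[]`); `label` gives the query at a node,
`esub` and `ecls` the mgu and the clause variant of the edge into a node. -/
structure LDTree (F Pr : Type) (P : Prog F Pr) (Q0 : Query F Pr) : Type where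
  dom : Set (List ℕ)
  label : List ℕ → Query F Pr
  esub : List ℕ → Subst F
  ecls : List ℕ → Option (Clause F Pr)
  root_mem : [] ∈ dom
  root_label : label [] = Q0
  root_esub : esub [] = Subst.idS
  root_ecls : ecls [] = none
  prefix_closed : ∀ p q : List ℕ, p <+: q → q ∈ dom → p ∈ dom
  sibling_closed : ∀ (p : List ℕ) (k k' : ℕ), k' ≤ k → p ++ [k] ∈ dom → p ++ [k'] ∈ dom
  empty_leaf : ∀ p ∈ dom, label p = [] → ∀ k : ℕ, p ++ [k] ∉ dom
  cut_step : ∀ p ∈ dom, ∀ rest : Query F Pr, label p = .cut :: rest →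
    (p ++ [0] ∈ dom ∧ label (p ++ [0]) = rest ∧ esub (p ++ [0]) = Subst.idS ∧
     ecls (p ++ [0]) = none ∧ ∀ k : ℕ, k ≠ 0 → p ++ [k] ∉ dom)
  atom_children_mem : ∀ p ∈ dom, ∀ (A : Atom F Pr) (rest : Query F Pr),
    label p = .atm A :: rest →
    ∀ k : ℕ, (p ++ [k] ∈ dom ↔ k < (applicables P A).length)
  atom_step : ∀ p ∈ dom, ∀ (A : Atom F Pr) (rest : Query F Pr),
    label p = .atm A :: rest → ∀ k : ℕ, p ++ [k] ∈ dom →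
      ∃ C C0 : Clause F Pr, (applicables P A)[k]? = some C0 ∧
        ecls (p ++ [k]) = some C ∧ Variant C C0 ∧
        IsMgu (esub (p ++ [k])) A C.head ∧ (esub (p ++ [k])).Idempotent ∧
        Relevant (esub (p ++ [k])) A C.head ∧
        label (p ++ [k]) = Query.subst (esub (p ++ [k])) (C.body ++ rest) ∧
        Disjoint C.vars (pathVarsAux label esub ecls p)

/-- An SLD-tree for `P` and `Q0`, under the selection rule `sel`
(`sel p` is the position of the selected atom of the query at node `p`). -/
structure SLDTree (F Pr : Type) (P : Prog F Pr) (Q0 : Query F Pr) : Type where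
  dom : Set (List ℕ)
  label : List ℕ → Query F Pr
  sel : List ℕ → ℕ
  esub : List ℕ → Subst F
  ecls : List ℕ → Option (Clause F Pr)
  root_mem : [] ∈ dom
  root_label : label [] = Q0
  root_esub : esub [] = Subst.idS
  root_ecls : ecls [] = none
  prefix_closed : ∀ p q : List ℕ, p <+: q → q ∈ dom → p ∈ dom
  sibling_closed : ∀ (p : List ℕ) (k k' : ℕ), k' ≤ k → p ++ [k] ∈ dom → p ++ [k'] ∈ dom
  empty_leaf : ∀ p ∈ dom, label p = [] → ∀ k : ℕ, p ++ [k] ∉ dom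
  sel_lt : ∀ p ∈ dom, label p ≠ [] → sel p < (label p).length
  cut_step : ∀ p ∈ dom, ∀ l r : Query F Pr, label p = l ++ .cut :: r → sel p = l.length →
    (p ++ [0] ∈ dom ∧ label (p ++ [0]) = l ++ r ∧ esub (p ++ [0]) = Subst.idS ∧
     ecls (p ++ [0]) = none ∧ ∀ k : ℕ, k ≠ 0 → p ++ [k] ∉ dom)
  atom_children_mem : ∀ p ∈ dom, ∀ (l : Query F Pr) (A : Atom F Pr) (r : Query F Pr),
    label p = l ++ .atm A :: r → sel p = l.length →
    ∀ k : ℕ, (p ++ [k] ∈ dom ↔ k < (applicables P A).length)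
  atom_step : ∀ p ∈ dom, ∀ (l : Query F Pr) (A : Atom F Pr) (r : Query F Pr),
    label p = l ++ .atm A :: r → sel p = l.length → ∀ k : ℕ, p ++ [k] ∈ dom →
      ∃ C C0 : Clause F Pr, (applicables P A)[k]? = some C0 ∧
        ecls (p ++ [k]) = some C ∧ Variant C C0 ∧
        IsMgu (esub (p ++ [k])) A C.head ∧ (esub (p ++ [k])).Idempotent ∧
        Relevant (esub (p ++ [k])) A C.head ∧
        label (p ++ [k]) = Query.subst (esub (p ++ [k])) (l ++ C.body ++ r) ∧
        Disjoint C.vars (pathVarsAux label esub ecls p)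

/-- `P` is semi-complete w.r.t. `S`: complete for every query possessing a finite SLD-tree. -/
def SemiComplete (P : Prog F Pr) (S : Set (Atom F Pr)) : Prop :=
  ∀ Q : Query F Pr, (∃ T : SLDTree F Pr P Q, T.dom.Finite) → CompleteFor P S Q

/-! ### The preorder sequence `seq(T)` and pruning -/

/-- The subtree of `S` rooted at `q` is finite. -/
def SubtreeFin (S : Set (List ℕ)) (q : List ℕ) : Prop := {x ∈ S | q <+: x}.Finite

/-- Node `p` occurs in the preorder sequence `seq` of the subgraph `S`:
all subtrees to the left of the path to `p` are finite. -/
def InSeq (S : Set (List ℕ)) (p : List ℕ) : Prop :=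
  p ∈ S ∧ ∀ (q : List ℕ) (k k' : ℕ), (q ++ [k]) <+: p → k' < k → SubtreeFin S (q ++ [k'])

/-- `p` strictly precedes `q` in the preorder ordering of tree nodes. -/
def PreLt (p q : List ℕ) : Prop :=
  (p <+: q ∧ p ≠ q) ∨
  ∃ (r : List ℕ) (a b : ℕ), a < b ∧ (r ++ [a]) <+: p ∧ (r ++ [b]) <+: q

variable {P : Prog F Pr} {Q0 : Query F Pr}

/-- An executing node: a node whose query starts with the cut. -/
def LDTree.ExecNode (T : LDTree F Pr P Q0) (e : List ℕ) : Prop :=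
  ∃ rest : Query F Pr, T.label e = .cut :: rest

/-- `s` is the first node `Q_j` of the cutting sequence of the executing node `e`:
the protected suffix of length `|label e|` persists from `s` to `e`,
and `s` is the shallowest such node. -/
def LDTree.CutStart (T : LDTree F Pr P Q0) (e s : List ℕ) : Prop :=
  s <+: e ∧
  (∀ q : List ℕ, s <+: q → q <+: e → q ≠ e → (T.label e).length < (T.label q).length) ∧
  (s = [] ∨ ∃ (p : List ℕ) (k : ℕ), s = p ++ [k] ∧
      ¬ ((T.label e).length < (T.label p).length))

/-- The introducing node of a cutting sequence starting at `s`
(for a cut of the initial query it is the root itself). -/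
def cutIntro (s : List ℕ) : List ℕ := if s = [] then [] else s.dropLast

/-- `x` is pruned by (the cutting sequence of) the executing node `e`:
`x` lies in a subtree rooted at a child, to the right of the cutting sequence,
of a node of the cutting sequence. -/
def LDTree.PrunedByExec (T : LDTree F Pr P Q0) (e x : List ℕ) : Prop :=
  T.ExecNode e ∧ ∃ s : List ℕ, T.CutStart e s ∧
    ∃ (q : List ℕ) (k k' : ℕ), cutIntro s <+: q ∧ (q ++ [k]) <+: e ∧ k < k' ∧
      (q ++ [k']) <+: x

/-- `e` is the (n+1)-st executing node in the preorder sequence of the subgraph `S`. -/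
def LDTree.IsNthExec (T : LDTree F Pr P Q0) (S : Set (List ℕ)) (n : ℕ) (e : List ℕ) : Prop :=
  e ∈ S ∧ T.ExecNode e ∧ InSeq S e ∧
  {e' : List ℕ | e' ∈ S ∧ T.ExecNode e' ∧ InSeq S e' ∧ PreLt e' e}.Finite ∧
  {e' : List ℕ | e' ∈ S ∧ T.ExecNode e' ∧ InSeq S e' ∧ PreLt e' e}.ncard = n

/-- The sequence of trees `T_0, T_1, …` of the definition of the pruned LD-tree. -/
def LDTree.stage (T : LDTree F Pr P Q0) : ℕ → Set (List ℕ)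
  | 0 => T.dom
  | n+1 => T.stage n \
      {x : List ℕ | ∃ e : List ℕ, T.IsNthExec (T.stage n) n e ∧ T.PrunedByExec e x}

/-- The pruned LD-tree `pruned(T)`: the nodes surviving all stages
and occurring in the preorder sequence of the resulting subgraph. -/
def LDTree.prunedDom (T : LDTree F Pr P Q0) : Set (List ℕ) :=
  {p ∈ ⋂ n : ℕ, T.stage n | InSeq (⋂ n : ℕ, T.stage n) p}

/-- Composition of the mgu's along a path (auxiliary, from node `q` down `rest`). -/
def LDTree.branchSubstAux (T : LDTree F Pr P Q0) : List ℕ → List ℕ → Subst F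
  | _, [] => Subst.idS
  | q, k :: rest => Subst.comp (T.esub (q ++ [k])) (T.branchSubstAux (q ++ [k]) rest)

/-- Composition of the mgu's along the branch from the root to `p`. -/
def LDTree.branchSubst (T : LDTree F Pr P Q0) (p : List ℕ) : Subst F :=
  T.branchSubstAux [] p

/-- The node `p` occurs in a cutting sequence of the subgraph `S` of `T`
only as its introducing node. -/
def LDTree.OnlyIntro (T : LDTree F Pr P Q0) (S : Set (List ℕ)) (p : List ℕ) : Prop :=
  ∀ e s : List ℕ, e ∈ S → T.ExecNode e → T.CutStart e s →
    (∀ q : List ℕ, cutIntro s <+: q → q <+: e → q ∈ S) →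
    cutIntro s <+: p → p <+: e → (s ≠ [] ∧ p = cutIntro s)

end LP

namespace LP

/-! ### Terms, substitutions and variables -/

section Lifting

variable {F Pr : Type}

theorem Tm.ind {p : Tm F → Prop} (hv : ∀ n, p (.var n))
    (hf : ∀ f ts, (∀ t ∈ ts, p t) → p (.fn f ts)) : ∀ t, p t
  | .var n => hv n
  | .fn f ts => hf f ts (fun t _ => Tm.ind hv hf t)
decreasing_by
  have := List.sizeOf_lt_of_mem ‹t ∈ ts›
  simp only [Tm.fn.sizeOf_spec]
  omega

@[simp] theorem Tm.subst_var (θ : Subst F) (n : ℕ) : (Tm.var n).subst θ = θ n := by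
  rw [Tm.subst]

@[simp] theorem Tm.subst_fn (θ : Subst F) (f : F) (ts : List (Tm F)) :
    (Tm.fn f ts).subst θ = .fn f (ts.map (Tm.subst θ)) := by
  rw [Tm.subst]; simp

@[simp] theorem Tm.mem_vars_var {n m : ℕ} : m ∈ (Tm.var n : Tm F).vars ↔ m = n := by
  simp [Tm.vars, Tm.varsL]

@[simp] theorem Tm.mem_vars_fn {n : ℕ} {f : F} {ts : List (Tm F)} :
    n ∈ (Tm.fn f ts).vars ↔ ∃ t ∈ ts, n ∈ t.vars := by
  simp only [Tm.vars, Set.mem_ofPred_eq]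
  rw [Tm.varsL]; simp

theorem Tm.subst_subst (a b : Subst F) (t : Tm F) :
    (t.subst a).subst b = t.subst (fun n => (a n).subst b) := by
  induction t using Tm.ind with
  | hv n => simp
  | hf f ts ih => simpa using ih

theorem Tm.subst_eq_iff (a b : Subst F) (t : Tm F) :
    t.subst a = t.subst b ↔ ∀ n ∈ t.vars, a n = b n := by
  induction t using Tm.ind with
  | hv n => simp
  | hf f ts ih =>
    simp only [Tm.subst_fn, Tm.fn.injEq, true_and, Tm.mem_vars_fn, List.map_inj_left]
    constructor
    · rintro h n ⟨t, ht, hn⟩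
      exact (ih t ht).1 (h t ht) n hn
    · intro h t ht
      exact (ih t ht).2 fun n hn => h n ⟨t, ht, hn⟩

theorem Tm.subst_id (t : Tm F) : t.subst Tm.var = t := by
  induction t using Tm.ind with
  | hv n => simp
  | hf f ts ih => simpa using (List.map_congr_left ih).trans (List.map_id ts)

theorem Tm.mem_vars_subst {θ : Subst F} {t : Tm F} {n : ℕ} :
    n ∈ (t.subst θ).vars ↔ ∃ m ∈ t.vars, n ∈ (θ m).vars := by
  induction t using Tm.ind with
  | hv n => simp
  | hf f ts ih =>
    simp only [Tm.subst_fn, Tm.mem_vars_fn, List.mem_map]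
    constructor
    · rintro ⟨_, ⟨t, ht, rfl⟩, h⟩
      obtain ⟨m, hm, hn⟩ := (ih t ht).1 h
      exact ⟨m, ⟨t, ht, hm⟩, hn⟩
    · rintro ⟨m, ⟨t, ht, hm⟩, hn⟩
      exact ⟨_, ⟨t, ht, rfl⟩, (ih t ht).2 ⟨m, hm, hn⟩⟩

theorem Atom.subst_subst (a b : Subst F) (A : Atom F Pr) :
    (A.subst a).subst b = A.subst (fun n => (a n).subst b) := by
  simp [Atom.subst, Tm.subst_subst]

theorem Atom.subst_congr {a b : Subst F} {A : Atom F Pr} (h : ∀ n ∈ A.vars, a n = b n) :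
    A.subst a = A.subst b := by
  simp only [Atom.subst, Atom.mk.injEq, true_and, List.map_inj_left]
  exact fun t ht => (Tm.subst_eq_iff a b t).2 fun n hn => h n ⟨t, ht, hn⟩

theorem Atom.subst_id (A : Atom F Pr) : A.subst Tm.var = A := by
  cases A
  simpa [Atom.subst] using List.map_id'' Tm.subst_id _

theorem Atom.mem_vars_subst {θ : Subst F} {A : Atom F Pr} {n : ℕ} :
    n ∈ (A.subst θ).vars ↔ ∃ m ∈ A.vars, n ∈ (θ m).vars := by
  simp only [Atom.vars, Atom.subst, Set.mem_ofPred_eq, List.mem_map]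
  constructor
  · rintro ⟨_, ⟨t, ht, rfl⟩, h⟩
    obtain ⟨m, hm, hn⟩ := Tm.mem_vars_subst.1 h
    exact ⟨m, ⟨t, ht, hm⟩, hn⟩
  · rintro ⟨m, ⟨t, ht, hm⟩, hn⟩
    exact ⟨_, ⟨t, ht, rfl⟩, Tm.mem_vars_subst.2 ⟨m, hm, hn⟩⟩

theorem Atom.vars_finite (A : Atom F Pr) : A.vars.Finite := by
  have : A.vars = ⋃ t ∈ {t | t ∈ A.args}, {n | n ∈ t.varsL} := by
    ext n; simp [Atom.vars, Tm.vars]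
  rw [this]
  exact (List.finite_toSet _).biUnion fun t _ => List.finite_toSet _

theorem Query.mem_vars {Q : Query F Pr} {n : ℕ} :
    n ∈ Query.vars Q ↔ ∃ A, EAtom.atm A ∈ Q ∧ n ∈ A.vars := by
  simp only [Query.vars, Set.mem_ofPred_eq]
  constructor
  · rintro ⟨_ | A, ha, hn⟩
    · exact hn.elim
    · exact ⟨A, ha, hn⟩
  · rintro ⟨A, ha, hn⟩
    exact ⟨_, ha, hn⟩

theorem Query.subst_subst (a b : Subst F) (Q : Query F Pr) :
    Query.subst b (Query.subst a Q) = Query.subst (fun n => (a n).subst b) Q := by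
  simp only [Query.subst, List.map_map, List.map_inj_left]
  rintro (_ | A) _
  · rfl
  · simp [EAtom.subst, Atom.subst_subst]

theorem Query.subst_congr {a b : Subst F} {Q : Query F Pr}
    (h : ∀ n ∈ Query.vars Q, a n = b n) : Query.subst a Q = Query.subst b Q := by
  simp only [Query.subst, List.map_inj_left]
  rintro (_ | A) hA
  · rfl
  · simp only [EAtom.subst, EAtom.atm.injEq]
    exact Atom.subst_congr fun n hn => h n ⟨_, hA, hn⟩

theorem Query.subst_id (Q : Query F Pr) : Query.subst Tm.var Q = Q := by
  refine List.map_id'' ?_ Q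
  rintro (_ | A)
  · rfl
  · simp [EAtom.subst, Atom.subst_id]

theorem Query.mem_vars_subst {θ : Subst F} {Q : Query F Pr} {n : ℕ} :
    n ∈ Query.vars (Query.subst θ Q) ↔ ∃ m ∈ Query.vars Q, n ∈ (θ m).vars := by
  simp only [Query.mem_vars]
  constructor
  · rintro ⟨A, hA, hn⟩
    obtain ⟨_ | A', h, e⟩ := List.mem_map.1 hA
    · cases e
    · cases e
      obtain ⟨m, hm, hn⟩ := Atom.mem_vars_subst.1 hn
      exact ⟨m, ⟨A', h, hm⟩, hn⟩
  · rintro ⟨m, ⟨A, hA, hm⟩, hn⟩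
    exact ⟨_, List.mem_map.2 ⟨_, hA, rfl⟩, Atom.mem_vars_subst.2 ⟨m, hm, hn⟩⟩

theorem Query.vars_finite (Q : Query F Pr) : (Query.vars Q).Finite := by
  have : Query.vars Q = ⋃ a ∈ {a | a ∈ Q}, EAtom.vars a := by
    ext n; simp [Query.vars]
  rw [this]
  refine (List.finite_toSet _).biUnion ?_
  rintro (_ | A) _
  · exact Set.finite_empty
  · exact A.vars_finite

theorem Query.vars_bounded (Q : Query F Pr) : ∃ N, ∀ n ∈ Query.vars Q, n < N := by
  obtain ⟨N, hN⟩ := Q.vars_finite.bddAbove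
  exact ⟨N + 1, fun n hn => Nat.lt_succ_of_le (hN hn)⟩

theorem Clause.vars_bounded (C : Clause F Pr) : ∃ N, ∀ n ∈ C.vars, n < N := by
  obtain ⟨N, hN⟩ := (C.head.vars_finite.union C.body.vars_finite).bddAbove
  exact ⟨N + 1, fun n hn => Nat.lt_succ_of_le (hN hn)⟩

/-! ### Unification -/

/-- `θ` unifies the lists `ts` and `us` position by position, involves only their variables, and
satisfies `θτ = τ` for each of their unifiers `τ`. This is stronger than being most general:
taking `τ = θ` yields idempotency. -/
structure StrongMgu (θ : Subst F) (ts us : List (Tm F)) : Prop where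
  unif : ts.map (Tm.subst θ) = us.map (Tm.subst θ)
  absorb : ∀ τ : Subst F, ts.map (Tm.subst τ) = us.map (Tm.subst τ) → ∀ n, (θ n).subst τ = τ n
  rel : ∀ n, θ n ≠ .var n → ∀ m, m = n ∨ m ∈ (θ n).vars → ∃ t ∈ ts ++ us, m ∈ t.vars

theorem StrongMgu.swap {θ : Subst F} {a b : Tm F} {ts us : List (Tm F)}
    (h : StrongMgu θ (a :: ts) (b :: us)) : StrongMgu θ (b :: ts) (a :: us) where
  unif := by have := h.unif; simp only [List.map_cons, List.cons.injEq] at this ⊢; tauto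
  absorb := fun τ hτ => h.absorb τ (by
    simp only [List.map_cons, List.cons.injEq] at hτ ⊢; tauto)
  rel := fun n hn m hm => by
    obtain ⟨t, ht, hmt⟩ := h.rel n hn m hm
    refine ⟨t, ?_, hmt⟩
    simp only [List.mem_append, List.mem_cons] at ht ⊢
    tauto

/-- The substitution mapping `x` to `t` and fixing every other variable. -/
def bind (x : ℕ) (t : Tm F) : Subst F := Function.update Tm.var x t

theorem bind_absorb {x : ℕ} {t : Tm F} {τ : Subst F} (h : τ x = t.subst τ) :
    (fun n => (bind x t n).subst τ) = τ := by
  funext n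
  by_cases hn : n = x
  · subst hn; simp [bind, h]
  · simp [bind, hn]

theorem map_bind_absorb {x : ℕ} {t : Tm F} {τ : Subst F} (h : τ x = t.subst τ)
    (ts : List (Tm F)) :
    (ts.map (Tm.subst (bind x t))).map (Tm.subst τ) = ts.map (Tm.subst τ) := by
  simp [Tm.subst_subst, bind_absorb h]

theorem bind_subst_of_notMem {x : ℕ} {t : Tm F} (h : x ∉ t.vars) : t.subst (bind x t) = t := by
  conv_rhs => rw [← Tm.subst_id t]
  refine (Tm.subst_eq_iff _ _ _).2 fun n hn => ?_
  have : n ≠ x := fun e => h (e ▸ hn)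
  simp [bind, this]

theorem mem_vars_bind {x : ℕ} {t s : Tm F} {m : ℕ} (h : m ∈ (s.subst (bind x t)).vars) :
    m ∈ t.vars ∨ m ∈ s.vars := by
  obtain ⟨k, hk, hm⟩ := Tm.mem_vars_subst.1 h
  by_cases e : k = x
  · subst e; left; simpa [bind] using hm
  · right
    have : m = k := by simpa [bind, e] using hm
    exact this ▸ hk

/-- Variable elimination: a solution of the equations with `x` replaced by `t` extends to a
solution of the equations together with `x = t`. -/
theorem StrongMgu.elim {θ : Subst F} {x : ℕ} {t : Tm F} {ts us : List (Tm F)} (hx : x ∉ t.vars)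
    (h : StrongMgu θ (ts.map (Tm.subst (bind x t))) (us.map (Tm.subst (bind x t)))) :
    StrongMgu (fun n => (bind x t n).subst θ) (.var x :: ts) (t :: us) where
  unif := by
    have h1 : t.subst (fun n => (bind x t n).subst θ) = t.subst θ := by
      rw [← Tm.subst_subst, bind_subst_of_notMem hx]
    have h2 := h.unif
    simp only [List.map_map, Function.comp_def, Tm.subst_subst] at h2
    simp only [List.map_cons, h1, List.cons.injEq]
    exact ⟨by simp [bind], h2⟩
  absorb := fun τ hτ n => by
    simp only [List.map_cons, Tm.subst_var, List.cons.injEq] at hτ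
    have ha := h.absorb τ (by rw [map_bind_absorb hτ.1, map_bind_absorb hτ.1, hτ.2])
    rw [Tm.subst_subst, funext ha]
    exact congrFun (bind_absorb hτ.1) n
  rel := by
    have key : ∀ m, (∃ s ∈ ts.map (Tm.subst (bind x t)) ++ us.map (Tm.subst (bind x t)),
        m ∈ s.vars) → ∃ s ∈ (Tm.var x :: ts) ++ (t :: us), m ∈ s.vars := by
      rintro m ⟨s, hs, hm⟩
      rw [← List.map_append] at hs
      obtain ⟨s, hs', rfl⟩ := List.mem_map.1 hs
      rcases mem_vars_bind hm with hm | hm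
      · exact ⟨t, by simp, hm⟩
      · refine ⟨s, ?_, hm⟩
        rcases List.mem_append.1 hs' with hs | hs <;> simp [hs]
    intro n hn m hm
    by_cases e : n = x
    · subst e
      simp only [bind, Function.update_self] at hm
      rcases hm with rfl | hm
      · exact ⟨.var m, by simp, by simp⟩
      · obtain ⟨k, hk, hm⟩ := Tm.mem_vars_subst.1 hm
        by_cases hθ : θ k = .var k
        · rw [hθ, Tm.mem_vars_var] at hm
          exact ⟨t, by simp, hm ▸ hk⟩
        · exact key m (h.rel k hθ m (.inr hm))
    · simp only [bind, Function.update_of_ne e, Tm.subst_var, ne_eq] at hn hm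
      exact key m (h.rel n hn m hm)

theorem sizeOf_append_lt (as bs : List (Tm F)) (f : F) :
    sizeOf (as ++ bs) < sizeOf (Tm.fn f as :: bs) := by
  have : sizeOf (as ++ bs) ≤ sizeOf as + sizeOf bs := by
    induction as with
    | nil => simp
    | cons a as ih => simp only [List.cons_append, List.cons.sizeOf_spec]; omega
  simp only [List.cons.sizeOf_spec, Tm.fn.sizeOf_spec]
  omega

theorem Tm.sizeOf_le_subst {σ : Subst F} {n : ℕ} {t : Tm F} (h : n ∈ t.vars) :
    sizeOf (σ n) ≤ sizeOf (t.subst σ) := by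
  induction t using Tm.ind with
  | hv m => simp_all
  | hf f ts ih =>
    obtain ⟨t, ht, hn⟩ := Tm.mem_vars_fn.1 h
    have h1 := ih t ht hn
    have h2 : sizeOf (t.subst σ) < sizeOf (ts.map (Tm.subst σ)) :=
      List.sizeOf_lt_of_mem (List.mem_map_of_mem ht)
    simp only [Tm.subst_fn, Tm.fn.sizeOf_spec]
    omega

/-- Occurs check: a variable has no common instance with a compound term containing it. -/
theorem notMem_vars_of_unif {σ : Subst F} {x : ℕ} {f : F} {ts : List (Tm F)}
    (h : σ x = (Tm.fn f ts).subst σ) : x ∉ (Tm.fn f ts).vars := by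
  intro hx
  obtain ⟨t, ht, hn⟩ := Tm.mem_vars_fn.1 hx
  have h1 := Tm.sizeOf_le_subst (σ := σ) hn
  have h2 : sizeOf (t.subst σ) < sizeOf (ts.map (Tm.subst σ)) :=
    List.sizeOf_lt_of_mem (List.mem_map_of_mem ht)
  rw [h] at h1
  simp only [Tm.subst_fn, Tm.fn.sizeOf_spec] at h1
  omega

/-- Unifiable lists of terms have a strong mgu. The recursion is on the size of the common
instance `ts σ` under a fixed unifier `σ`: it drops at each step, since eliminating a variable
leaves the `σ`-instances of the remaining equations unchanged. -/
theorem exists_strongMgu (σ : Subst F) : ∀ ts us : List (Tm F),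
    ts.map (Tm.subst σ) = us.map (Tm.subst σ) → ∃ θ, StrongMgu θ ts us
  | [], [], _ => ⟨Tm.var, rfl, fun _ _ _ => by simp, fun n hn => (hn rfl).elim⟩
  | .var x :: ts, t :: us, h => by
    have hc : σ x = t.subst σ ∧ ts.map (Tm.subst σ) = us.map (Tm.subst σ) := by
      simpa only [List.map_cons, Tm.subst_var, List.cons.injEq] using h
    by_cases ht : t = .var x
    · subst ht
      obtain ⟨θ, hθ⟩ := exists_strongMgu σ ts us hc.2
      refine ⟨θ, by simp [hθ.unif], fun τ hτ => hθ.absorb τ (by simpa using hτ), ?_⟩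
      intro n hn m hm
      obtain ⟨s, hs, hms⟩ := hθ.rel n hn m hm
      refine ⟨s, ?_, hms⟩
      simp only [List.mem_append, List.mem_cons] at hs ⊢
      tauto
    · have hx : x ∉ t.vars := by
        cases t with
        | var y => simpa [eq_comm] using ht
        | fn f as => exact notMem_vars_of_unif hc.1
      obtain ⟨θ, hθ⟩ := exists_strongMgu σ (ts.map (Tm.subst (bind x t)))
        (us.map (Tm.subst (bind x t))) (by rw [map_bind_absorb hc.1, map_bind_absorb hc.1, hc.2])
      exact ⟨_, hθ.elim hx⟩
  | .fn f as :: ts, .var x :: us, h => by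
    have hc : (Tm.fn f as).subst σ = σ x ∧ ts.map (Tm.subst σ) = us.map (Tm.subst σ) := by
      simpa only [List.map_cons, Tm.subst_var, List.cons.injEq] using h
    obtain ⟨θ, hθ⟩ := exists_strongMgu σ (ts.map (Tm.subst (bind x (.fn f as))))
      (us.map (Tm.subst (bind x (.fn f as))))
      (by rw [map_bind_absorb hc.1.symm, map_bind_absorb hc.1.symm, hc.2])
    exact ⟨_, (hθ.elim (notMem_vars_of_unif hc.1.symm)).swap⟩
  | .fn f as :: ts, .fn g bs :: us, h => by
    simp only [List.map_cons, Tm.subst_fn, List.cons.injEq, Tm.fn.injEq] at h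
    obtain ⟨⟨rfl, h1⟩, h2⟩ := h
    have hl : as.length = bs.length := by simpa using congrArg List.length h1
    have key : ∀ τ : Subst F, (as ++ ts).map (Tm.subst τ) = (bs ++ us).map (Tm.subst τ) ↔
        (Tm.fn f as :: ts).map (Tm.subst τ) = (Tm.fn f bs :: us).map (Tm.subst τ) := by
      intro τ
      simp only [List.map_append, List.map_cons, Tm.subst_fn, List.cons.injEq, Tm.fn.injEq,
        true_and]
      exact ⟨fun e => List.append_inj e (by simpa using hl), fun e => by rw [e.1, e.2]⟩
    obtain ⟨θ, hθ⟩ := exists_strongMgu σ (as ++ ts) (bs ++ us) (by simp [h1, h2])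
    refine ⟨θ, (key θ).1 hθ.unif, fun τ hτ => hθ.absorb τ ((key τ).2 hτ), ?_⟩
    intro n hn m hm
    obtain ⟨s, hs, hms⟩ := hθ.rel n hn m hm
    simp only [List.mem_append] at hs
    rcases hs with (hs | hs) | (hs | hs)
    · exact ⟨.fn f as, by simp, Tm.mem_vars_fn.2 ⟨s, hs, hms⟩⟩
    · exact ⟨s, by simp [hs], hms⟩
    · exact ⟨.fn f bs, by simp, Tm.mem_vars_fn.2 ⟨s, hs, hms⟩⟩
    · exact ⟨s, by simp [hs], hms⟩
termination_by ts => sizeOf (ts.map (Tm.subst σ))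
decreasing_by
  · simp only [List.map_cons, List.cons.sizeOf_spec]; omega
  · rw [map_bind_absorb hc.1]
    simp only [List.map_cons, List.cons.sizeOf_spec]; omega
  · rw [map_bind_absorb hc.1.symm]
    simp only [List.map_cons, List.cons.sizeOf_spec]; omega
  · rw [List.map_append, List.map_cons, Tm.subst_fn]
    exact sizeOf_append_lt _ _ _

/-- Unifiable atoms have an idempotent relevant mgu `μ` with `μτ = τ` for the given unifier. -/
theorem exists_mgu {A B : Atom F Pr} {τ : Subst F} (h : Unifies τ A B) :
    ∃ μ : Subst F, IsMgu μ A B ∧ μ.Idempotent ∧ Relevant μ A B ∧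
      ∀ n, (μ n).subst τ = τ n := by
  obtain ⟨p, as⟩ := A
  obtain ⟨q, bs⟩ := B
  have hU : ∀ σ : Subst F, Unifies σ ⟨p, as⟩ (⟨q, bs⟩ : Atom F Pr) ↔
      p = q ∧ as.map (Tm.subst σ) = bs.map (Tm.subst σ) := by
    simp [Unifies, Atom.subst]
  obtain ⟨hp, ht⟩ := (hU τ).1 h
  obtain ⟨μ, hμ⟩ := exists_strongMgu τ as bs ht
  refine ⟨μ, ⟨(hU μ).2 ⟨hp, hμ.unif⟩,
    fun σ hσ => ⟨σ, fun n => (hμ.absorb σ ((hU σ).1 hσ).2 n).symm⟩⟩, ?_, ?_, hμ.absorb τ ht⟩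
  · refine Set.disjoint_left.2 ?_
    rintro m hm ⟨n, -, hmn⟩
    -- `μ` fixes the term `μ n`, hence each of its variables.
    have h1 : (μ n).subst μ = (μ n).subst Tm.var := by
      rw [Tm.subst_id]; exact hμ.absorb μ hμ.unif n
    exact hm ((Tm.subst_eq_iff _ _ _).1 h1 m hmn)
  · have key : ∀ m, (∃ t ∈ as ++ bs, m ∈ t.vars) →
        m ∈ Atom.vars (⟨p, as⟩ : Atom F Pr) ∪ Atom.vars (⟨q, bs⟩ : Atom F Pr) := by
      rintro m ⟨t, ht, hm⟩
      rcases List.mem_append.1 ht with ht | ht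
      · exact .inl ⟨t, ht, hm⟩
      · exact .inr ⟨t, ht, hm⟩
    rintro m (hm | ⟨n, hn, hm⟩)
    · exact key m (hμ.rel m hm m (.inl rfl))
    · exact key m (hμ.rel n hn m (.inr hm))

/-! ### Lifting a single step -/

/-- The renaming `n ↦ n + N`. -/
def shift (N : ℕ) : Subst F := fun n => .var (n + N)

theorem variant_shift (N : ℕ) (C : Clause F Pr) : Variant (C.subst (shift N)) C := by
  refine ⟨⟨_, rfl⟩, fun n => .var (n - N), ?_⟩
  have h : (fun n => (shift N n : Tm F).subst fun n => .var (n - N)) = Tm.var := by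
    funext n; simp [shift]
  cases C
  simp only [Clause.subst, Atom.subst_subst, Query.subst_subst, h, Atom.subst_id, Query.subst_id]

theorem mem_vars_shift {N n : ℕ} {C : Clause F Pr} (h : n ∈ (C.subst (shift N)).vars) :
    ∃ m ∈ C.vars, n = m + N := by
  rcases h with h | h
  · obtain ⟨m, hm, hn⟩ := Atom.mem_vars_subst.1 h
    exact ⟨m, .inl hm, by simpa [shift] using hn⟩
  · obtain ⟨m, hm, hn⟩ := Query.mem_vars_subst.1 h
    exact ⟨m, .inr hm, by simpa [shift] using hn⟩

/-- A step from `R = Qσ` to `R'` lifts to an LD-resolution step from `Q` to some `Q'` with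
`R' = Q'σ'`. All variables of `Q` lie below `N`; the clause variant takes its variables from
`[N, N')`, and all variables involved in the lifted step lie below `N'`. -/
theorem lift_step {P : Prog F Pr} {R R' : Query F Pr} {α : Subst F} {oc : Option (Clause F Pr)}
    (hstep : UStep P R R' α oc) {Q : Query F Pr} {σ : Subst F} {N : ℕ}
    (hR : R = Query.subst σ Q) (hN : ∀ n ∈ Query.vars Q, n < N) :
    ∃ (Q' : Query F Pr) (σ' : Subst F) (N' : ℕ) (μ : Subst F) (oc' : Option (Clause F Pr)),
      (R' = Query.subst σ' Q' ∧ ∀ n ∈ Query.vars Q', n < N') ∧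
      DStep Q Q' μ oc' ∧ N ≤ N' ∧ (∀ n ∈ μ.varSet, n < N') ∧
      (∀ C, oc' = some C → ∀ n ∈ C.vars, N ≤ n ∧ n < N') ∧
      (∀ C, oc' = some C → ∃ C0 ∈ P, Variant C C0) ∧
      (oc = none ↔ oc' = none) ∧
      (∀ C C', oc = some C → oc' = some C' → Variant C' C) := by
  subst hR
  rcases hstep with ⟨rest, hQ, rfl, -, rfl⟩ | ⟨A, rest, B, C, hQ, rfl, hC, -, ⟨η, hη⟩, rfl⟩
  · obtain ⟨_ | A', rest', rfl, h1, rfl⟩ := List.map_eq_cons_iff.1 hQ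
    · refine ⟨rest', σ, N, Subst.idS, none, ⟨rfl, ?_⟩, .inl ⟨rest', rfl, rfl, rfl, rfl⟩, le_rfl,
        ?_, by simp, by simp, by simp, by simp⟩
      · rintro n ⟨a, ha, hn⟩
        exact hN n ⟨a, List.mem_cons_of_mem _ ha, hn⟩
      · rintro n (hn | ⟨m, hm, -⟩)
        · exact (hn rfl).elim
        · exact (hm rfl).elim
    · cases h1
  · obtain ⟨_ | A', rest', rfl, h1, rfl⟩ := List.map_eq_cons_iff.1 hQ
    · cases h1
    cases h1
    obtain ⟨hη1, hη2⟩ : Atom.subst α (Atom.subst σ A') = Atom.subst η C.head ∧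
        B = Query.subst η C.body := by
      simpa [Clause.subst] using hη
    obtain ⟨M, hM⟩ := C.vars_bounded
    -- Variables below `N` belong to the query, the others to the renamed clause.
    let τ : Subst F := fun n => if n < N then (σ n).subst α else η (n - N)
    have hτC : (fun n => (shift N n : Tm F).subst τ) = η := by
      funext n; simp [shift, τ]
    have hτA : Atom.subst τ A' = Atom.subst α (Atom.subst σ A') := by
      rw [Atom.subst_subst]
      exact Atom.subst_congr fun n hn => if_pos (hN n ⟨_, List.mem_cons_self, hn⟩)
    have hτr : Query.subst τ rest' = Query.subst α (Query.subst σ rest') := by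
      rw [Query.subst_subst]
      refine Query.subst_congr fun n hn => if_pos (hN n ?_)
      obtain ⟨a, ha, hn⟩ := hn
      exact ⟨a, List.mem_cons_of_mem _ ha, hn⟩
    have hU : Unifies τ A' (C.subst (shift N)).head := by
      simp only [Unifies, Clause.subst, Atom.subst_subst, hτC]
      rw [hτA, hη1]
    obtain ⟨μ, hmgu, hid, hrel, hab⟩ := exists_mgu hU
    have hCv : ∀ n ∈ (C.subst (shift N)).vars, N ≤ n ∧ n < N + M := by
      intro n hn
      obtain ⟨m, hm, rfl⟩ := mem_vars_shift hn
      have := hM m hm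
      omega
    have hμv : ∀ n ∈ μ.varSet, n < N + M := by
      intro n hn
      rcases hrel hn with hn | hn
      · have := hN n ⟨_, List.mem_cons_self, hn⟩
        omega
      · exact (hCv n (.inl hn)).2
    refine ⟨Query.subst μ ((C.subst (shift N)).body ++ rest'), τ, N + M, μ,
      some (C.subst (shift N)), ⟨?_, ?_⟩, .inr ⟨A', rest', _, rfl, rfl, hmgu, hid, hrel, rfl⟩,
      by omega, hμv, ?_, ?_, by simp, ?_⟩
    · have happ : Query.subst τ ((C.subst (shift N)).body ++ rest') =
          Query.subst τ (Query.subst (shift N) C.body) ++ Query.subst τ rest' := List.map_append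
      rw [Query.subst_subst μ, funext hab, happ, Query.subst_subst, hτC, hτr, hη2]
      rfl
    · intro n hn
      obtain ⟨m, ⟨a, ha, hm⟩, hn⟩ := Query.mem_vars_subst.1 hn
      by_cases e : μ m = .var m
      · rw [e, Tm.mem_vars_var] at hn
        subst hn
        rcases List.mem_append.1 ha with ha | ha
        · exact (hCv n (.inr ⟨a, ha, hm⟩)).2
        · have := hN n ⟨a, List.mem_cons_of_mem _ ha, hm⟩
          omega
      · exact hμv n (.inr ⟨m, e, hn⟩)
    · rintro _ ⟨⟩
      exact hCv
    · rintro _ ⟨⟩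
      exact ⟨C, hC, variant_shift N C⟩
    · rintro _ _ ⟨⟩ ⟨⟩
      exact variant_shift N C

end Lifting

/-- **Lifting (Corollary 2 of the paper, first part).**  Every unrestricted
LD-derivation `E` for `P` starting from an instance of `Q0` has a lift `D`
starting from `Q0`. -/
theorem lift_exists {F Pr : Type} (P : Prog F Pr) (Q0 : Query F Pr)
    (E : UDeriv F Pr P) (h : Query.Inst (E.Q 0) Q0) :
    ∃ D : Deriv F Pr, D.FromProg P ∧ D.Q 0 = Q0 ∧ IsLift D E := by
  obtain ⟨σ0, hσ0⟩ := h
  obtain ⟨N0, hN0⟩ := Q0.vars_bounded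
  -- A state `(Q, σ, N)` records the current query, the instantiating substitution, and a strict
  -- bound for all variables used so far.
  let R : ℕ → Query F Pr × Subst F × ℕ → Prop := fun i s =>
    E.Q i = Query.subst s.2.1 s.1 ∧ ∀ n ∈ Query.vars s.1, n < s.2.2
  have hstep : ∀ (i : ℕ) (s : Query F Pr × Subst F × ℕ),
      ∃ (s' : Query F Pr × Subst F × ℕ) (μ : Subst F) (oc : Option (Clause F Pr)),
      i < E.len → R i s → R (i + 1) s' ∧ DStep s.1 s'.1 μ oc ∧ s.2.2 ≤ s'.2.2 ∧
        (∀ n ∈ μ.varSet, n < s'.2.2) ∧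
        (∀ C, oc = some C → ∀ n ∈ C.vars, s.2.2 ≤ n ∧ n < s'.2.2) ∧
        (∀ C, oc = some C → ∃ C0 ∈ P, Variant C C0) ∧
        (E.cls i = none ↔ oc = none) ∧
        (∀ C C', E.cls i = some C → oc = some C' → Variant C' C) := by
    intro i s
    by_cases hi : i < E.len ∧ R i s
    · obtain ⟨Q', σ', N', μ, oc, H⟩ := lift_step (E.step i hi.1) hi.2.1 hi.2.2
      exact ⟨(Q', σ', N'), μ, oc, fun _ _ => H⟩
    · exact ⟨s, Subst.idS, none, fun h1 h2 => (hi ⟨h1, h2⟩).elim⟩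
  choose nxt mu cl H using hstep
  let S : ℕ → Query F Pr × Subst F × ℕ := fun i => Nat.rec (Q0, σ0, N0) nxt i
  have hR : ∀ i ≤ E.len, R i (S i) := by
    intro i
    induction i with
    | zero => exact fun _ => ⟨hσ0, hN0⟩
    | succ i ih => exact fun hi => (H i (S i) hi (ih (by omega))).1
  have HS := fun i (hi : i < E.len) => H i (S i) hi (hR i hi.le)
  have hmono : ∀ i ≤ E.len, ∀ j ≤ i, (S j).2.2 ≤ (S i).2.2 := by
    intro i hi j hj
    induction i, hj using Nat.le_induction with
    | base => exact le_rfl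
    | succ i hij ih => exact (ih (by omega)).trans (HS i hi).2.2.1
  refine ⟨⟨E.len, fun i => (S i).1, fun i => mu i (S i), fun i => cl i (S i),
    fun i hi => (HS i hi).2.1, ?_⟩, ?_, rfl, ⟨σ0, hσ0⟩, rfl, ?_⟩
  · intro i hi C hC
    refine Set.disjoint_left.2 fun n hn hh => ?_
    have h1 : (S i).2.2 ≤ n := ((HS i hi).2.2.2.2.1 C hC n hn).1
    have h2 : n < (S i).2.2 := by
      rcases hh with ⟨j, hj, hn⟩ | ⟨j, hj, hn⟩ | ⟨j, hj, C', hC', hn⟩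
      · exact ((hR j (by omega)).2 n hn).trans_le (hmono i hi.le j hj)
      · exact ((HS j (by omega)).2.2.2.1 n hn).trans_le (hmono i hi.le (j + 1) hj)
      · exact ((HS j (by omega)).2.2.2.2.1 C' hC' n hn).2.trans_le (hmono i hi.le (j + 1) hj)
    omega
  · intro i hi C hC
    exact (HS i hi).2.2.2.2.2.1 C hC
  · intro i hi
    exact (HS i hi).2.2.2.2.2.2

end LP
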